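/- Let G be a group acting by isometries on a geodesic δ-hyperbolic metric space S. Then every pair of distinct points of the Gromov boundary ∂S satisfies condition (C2) for the induced action of G on ∂S. -/

import Mathlib

/-- A geodesic segment from `u` to `v`: the image of an isometric embedding of
`[0, dist u v]` sending the endpoints to `u` and `v`. -/
def IsGeodesicSegment {S : Type*} [MetricSpace S] (Γ : Set S) (u v : S) : Prop :=
  ∃ γ : ℝ → S, γ 0 = u ∧ γ (dist u v) = v ∧
    (∀ s ∈ Set.Icc (0 : ℝ) (dist u v), ∀ t ∈ Set.Icc (0 : ℝ) (dist u v),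
      dist (γ s) (γ t) = |s - t|) ∧
    Γ = γ '' Set.Icc (0 : ℝ) (dist u v)

/-- A geodesic metric space: every pair of points is joined by a geodesic segment. -/
def GeodesicSpace (S : Type*) [MetricSpace S] : Prop :=
  ∀ u v : S, ∃ Γ : Set S, IsGeodesicSegment Γ u v

/-- `δ`-hyperbolicity: every geodesic triangle is `δ`-slim. -/
def DeltaHyperbolic (S : Type*) [MetricSpace S] (δ : ℝ) : Prop :=
  ∀ x y z : S, ∀ Γ₁ Γ₂ Γ₃ : Set S,
    IsGeodesicSegment Γ₁ x y → IsGeodesicSegment Γ₂ y z → IsGeodesicSegment Γ₃ z x →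
    ∀ p ∈ Γ₁, Metric.infDist p (Γ₂ ∪ Γ₃) ≤ δ

/-- A (left) action of a group `G` on a set `M`, given as a plain function. -/
def IsAction {G M : Type*} [Group G] (act : G → M → M) : Prop :=
  (∀ x : M, act 1 x = x) ∧ ∀ (g h : G) (x : M), act (g * h) x = act g (act h x)

/-- An action by homeomorphisms on a topological space. -/
def IsActionByHomeos {G M : Type*} [Group G] [TopologicalSpace M] (act : G → M → M) : Prop :=
  IsAction act ∧ ∀ g : G, Continuous (act g)

/-- An action by isometries on a metric space. -/
def IsIsometricAction {G S : Type*} [Group G] [MetricSpace S] (act : G → S → S) : Prop :=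
  IsAction act ∧ ∀ g : G, Isometry (act g)

theorem IsAction.injective {G M : Type*} [Group G] {act : G → M → M}
    (h : IsAction act) (g : G) : Function.Injective (act g) := by
  intro a b hab
  have h2 := congrArg (act g⁻¹) hab
  rw [← h.2 g⁻¹ g a, ← h.2 g⁻¹ g b, inv_mul_cancel, h.1, h.1] at h2
  exact h2

/-- The Gromov product of `x` and `y` with respect to the basepoint `e`. -/
noncomputable def gprod {S : Type*} [MetricSpace S] (e x y : S) : ℝ :=
  (dist x e + dist y e - dist x y) / 2

/-- A sequence converges to infinity if its pairwise Gromov products tend to infinity. -/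
def ConvToInfty {S : Type*} [MetricSpace S] (e : S) (s : ℕ → S) : Prop :=
  Filter.Tendsto (fun p : ℕ × ℕ => gprod e (s p.1) (s p.2)) Filter.atTop Filter.atTop

/-- The type of sequences in `S` converging to infinity. -/
def BSeq (S : Type*) [MetricSpace S] (e : S) := {s : ℕ → S // ConvToInfty e s}

/-- Two sequences converging to infinity are equivalent if their mutual Gromov
products tend to infinity. -/
def bequiv {S : Type*} [MetricSpace S] (e : S) (s t : BSeq S e) : Prop :=
  Filter.Tendsto (fun n => gprod e (s.1 n) (t.1 n)) Filter.atTop Filter.atTop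

/-- The Gromov boundary of `S` with respect to the basepoint `e`. -/
def GBoundary (S : Type*) [MetricSpace S] (e : S) := Quot (bequiv (S := S) e)

/-- A sequence in `S` tends to the boundary point `x`. -/
def TendstoBd {S : Type*} [MetricSpace S] (e : S) (s : ℕ → S) (x : GBoundary S e) : Prop :=
  ∃ h : ConvToInfty e s, Quot.mk _ (⟨s, h⟩ : BSeq S e) = x

/-- The Gromov product of a point `u ∈ S` with a boundary point `x`:
the infimum over sequences tending to `x` of the liminf of Gromov products. -/
noncomputable def gprodSB {S : Type*} [MetricSpace S] (e u : S) (x : GBoundary S e) : EReal :=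
  sInf {r : EReal | ∃ s : ℕ → S, TendstoBd e s x ∧
    r = Filter.liminf (fun n => (gprod e u (s n) : EReal)) Filter.atTop}

/-- The Gromov product of two boundary points. -/
noncomputable def gprodBB {S : Type*} [MetricSpace S] (e : S) (x y : GBoundary S e) : EReal :=
  sInf {r : EReal | ∃ s t : ℕ → S, TendstoBd e s x ∧ TendstoBd e t y ∧
    r = Filter.liminf (fun p : ℕ × ℕ => (gprod e (s p.1) (t p.2) : EReal)) Filter.atTop}

/-- `UK e K x = {s ∈ S | (x·s)_e > K}`. -/
def UK {S : Type*} [MetricSpace S] (e : S) (K : ℝ) (x : GBoundary S e) : Set S :=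
  {u : S | (K : EReal) < gprodSB e u x}

/-- `d'(x,y) = exp (−ζ (x·y)_e)` on the boundary (equal to `0` when the product is `∞`). -/
noncomputable def dExp {S : Type*} [MetricSpace S] (e : S) (ζ : ℝ) (x y : GBoundary S e) : ℝ :=
  if gprodBB e x y = ⊤ then 0 else Real.exp (-ζ * (gprodBB e x y).toReal)

/-- The chain metric `ρ(x,y) = inf Σ d'(s_k, s_{k+1})` over finite chains from `x` to `y`. -/
noncomputable def rhoChain {S : Type*} [MetricSpace S] (e : S) (ζ : ℝ)
    (x y : GBoundary S e) : ℝ :=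
  sInf {r : ℝ | ∃ (n : ℕ) (c : ℕ → GBoundary S e), c 0 = x ∧ c n = y ∧
    r = ∑ k ∈ Finset.range n, dExp e ζ (c k) (c (k + 1))}

/-- `ρ` is a metric. -/
def IsMetricFn {B : Type*} (ρ : B → B → ℝ) : Prop :=
  (∀ x y, 0 ≤ ρ x y) ∧ (∀ x y, ρ x y = 0 ↔ x = y) ∧ (∀ x y, ρ x y = ρ y x) ∧
  ∀ x y z, ρ x z ≤ ρ x y + ρ y z

/-- `ζ` is a suitable visual parameter: `ζ > 0`, the associated chain function `ρ` is a
metric on the boundary, and `d'/2 ≤ ρ ≤ d'`. -/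
def VisualParam {S : Type*} [MetricSpace S] (e : S) (ζ : ℝ) : Prop :=
  0 < ζ ∧ IsMetricFn (rhoChain e ζ) ∧
  ∀ x y : GBoundary S e, dExp e ζ x y / 2 ≤ rhoChain e ζ x y ∧ rhoChain e ζ x y ≤ dExp e ζ x y

/-- The topology on the Gromov boundary induced by the visual metric `ρ`. -/
noncomputable def bdTopology (S : Type*) [MetricSpace S] (e : S) (ζ : ℝ) :
    TopologicalSpace (GBoundary S e) :=
  TopologicalSpace.generateFrom
    {B | ∃ (x : GBoundary S e) (ε : ℝ), 0 < ε ∧ B = {y | rhoChain e ζ x y < ε}}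

theorem gprod_comp_ge {S : Type*} [MetricSpace S] (e : S) {f : S → S} (hf : Isometry f)
    (a b : S) : gprod e a b - dist (f e) e ≤ gprod e (f a) (f b) := by
  have h1 : dist a e - dist (f e) e ≤ dist (f a) e := by
    have h := dist_triangle (f a) e (f e)
    rw [hf.dist_eq] at h
    have hc := dist_comm e (f e)
    linarith
  have h2 : dist b e - dist (f e) e ≤ dist (f b) e := by
    have h := dist_triangle (f b) e (f e)
    rw [hf.dist_eq] at h
    have hc := dist_comm e (f e)
    linarith
  have h3 : dist (f a) (f b) = dist a b := hf.dist_eq a b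
  simp only [gprod, h3]; linarith

theorem ConvToInfty.comp {S : Type*} [MetricSpace S] {e : S} {f : S → S} (hf : Isometry f)
    {s : ℕ → S} (hs : ConvToInfty e s) : ConvToInfty e (fun n => f (s n)) := by
  have h : Filter.Tendsto (fun p : ℕ × ℕ => gprod e (s p.1) (s p.2) + -dist (f e) e)
      Filter.atTop Filter.atTop := Filter.tendsto_atTop_add_const_right _ _ hs
  refine Filter.tendsto_atTop_mono (fun p => ?_) h
  have := gprod_comp_ge e hf (s p.1) (s p.2)
  simpa [sub_eq_add_neg] using this

/-- The map induced on the Gromov boundary by an isometry of `S`. -/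
def bdMap {S : Type*} [MetricSpace S] (e : S) (f : S → S) (hf : Isometry f) :
    GBoundary S e → GBoundary S e :=
  Quot.map (fun s : BSeq S e => (⟨fun n => f (s.1 n), s.2.comp hf⟩ : BSeq S e))
    (by
      intro s t h
      have h' : Filter.Tendsto (fun n => gprod e (s.1 n) (t.1 n) + -dist (f e) e)
          Filter.atTop Filter.atTop := Filter.tendsto_atTop_add_const_right _ _ h
      refine Filter.tendsto_atTop_mono (fun n => ?_) h'
      have := gprod_comp_ge e hf (s.1 n) (t.1 n)
      simpa [sub_eq_add_neg] using this)

/-- The induced map on pairs. -/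
def pairMap {M : Type*} (f : M → M) (p : M × M) : M × M := (f p.1, f p.2)

/-- Condition (C) for an action on a topological space. -/
def ConditionC {G M : Type*} [TopologicalSpace M] (act : G → M → M) : Prop :=
  ∀ u v : M × M, u.1 = u.2 → v.1 = v.2 → u ≠ v →
    ∃ U V : Set (M × M), IsOpen U ∧ IsOpen V ∧ u ∈ U ∧ v ∈ V ∧
      ∀ a b : M × M, a.1 ≠ a.2 → b.1 ≠ b.2 → a ≠ b →
        ∃ A B : Set (M × M), IsOpen A ∧ IsOpen B ∧ a ∈ A ∧ b ∈ B ∧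
          {g : G | (pairMap (act g) '' A ∩ U).Nonempty ∧
            (pairMap (act g) '' B ∩ V).Nonempty}.Finite

/-- Condition (C₁) for a pair of open sets `U, V`. -/
def CondC1 {G M : Type*} [TopologicalSpace M] (act : G → M → M) (U V : Set M) : Prop :=
  ∀ p q : M, p ≠ q →
    ∃ A B : Set M, IsOpen A ∧ IsOpen B ∧ p ∈ A ∧ q ∈ B ∧
      {g : G | (act g '' A ∩ U).Nonempty ∧ (act g '' A ∩ V).Nonempty ∧
        (act g '' B ∩ U).Nonempty ∧ (act g '' B ∩ V).Nonempty}.Finite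

/-- Condition (C₂) for a pair of open sets `U, V`. -/
def CondC2 {G M : Type*} [TopologicalSpace M] (act : G → M → M) (U V : Set M) : Prop :=
  ∀ p q r : M, p ≠ q → q ≠ r → p ≠ r →
    ∃ A B C : Set M, IsOpen A ∧ IsOpen B ∧ IsOpen C ∧ p ∈ A ∧ q ∈ B ∧ r ∈ C ∧
      {g : G | (act g '' A ∩ U).Nonempty ∧ (act g '' B ∩ V).Nonempty ∧
        (act g '' C ∩ U).Nonempty ∧ (act g '' C ∩ V).Nonempty}.Finite

/-- Condition (C₃) for a pair of open sets `U, V`. -/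
def CondC3 {G M : Type*} [TopologicalSpace M] (act : G → M → M) (U V : Set M) : Prop :=
  ∀ p q r s : M, p ≠ q → p ≠ r → p ≠ s → q ≠ r → q ≠ s → r ≠ s →
    ∃ A B C D : Set M, IsOpen A ∧ IsOpen B ∧ IsOpen C ∧ IsOpen D ∧
      p ∈ A ∧ q ∈ B ∧ r ∈ C ∧ s ∈ D ∧
      {g : G | (act g '' A ∩ U).Nonempty ∧ (act g '' B ∩ U).Nonempty ∧
        (act g '' C ∩ V).Nonempty ∧ (act g '' D ∩ V).Nonempty}.Finite

/-- Two points `x, y` satisfy (C₁): some open sets `U ∋ x`, `V ∋ y` satisfy (C₁). -/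
def PairC1 {G M : Type*} [TopologicalSpace M] (act : G → M → M) (x y : M) : Prop :=
  ∃ U V : Set M, IsOpen U ∧ IsOpen V ∧ x ∈ U ∧ y ∈ V ∧ CondC1 (G := G) act U V

/-- Two points `x, y` satisfy (C₂). -/
def PairC2 {G M : Type*} [TopologicalSpace M] (act : G → M → M) (x y : M) : Prop :=
  ∃ U V : Set M, IsOpen U ∧ IsOpen V ∧ x ∈ U ∧ y ∈ V ∧ CondC2 (G := G) act U V

/-- Two points `x, y` satisfy (C₃). -/
def PairC3 {G M : Type*} [TopologicalSpace M] (act : G → M → M) (x y : M) : Prop :=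
  ∃ U V : Set M, IsOpen U ∧ IsOpen V ∧ x ∈ U ∧ y ∈ V ∧ CondC3 (G := G) act U V

/-- `g` has north–south dynamics on `M` with fixed points `x ≠ y`. -/
def NorthSouthAt {G M : Type*} [Group G] [TopologicalSpace M] (act : G → M → M)
    (g : G) (x y : M) : Prop :=
  x ≠ y ∧ (∀ z : M, act g z = z ↔ z = x ∨ z = y) ∧
  ∀ U V : Set M, IsOpen U → IsOpen V → x ∈ U → y ∈ V →
    ∃ N : ℕ, ∀ n : ℕ, N < n → act (g ^ n) '' Uᶜ ⊆ V

/-- `g` has north–south dynamics on `M`. -/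
def NorthSouth {G M : Type*} [Group G] [TopologicalSpace M] (act : G → M → M) (g : G) : Prop :=
  ∃ x y : M, NorthSouthAt act g x y

/-- A completely Hausdorff space: distinct points are separated by open sets with
disjoint closures. -/
def CompletelyHausdorff (M : Type*) [TopologicalSpace M] : Prop :=
  ∀ u v : M, u ≠ v → ∃ U V : Set M, IsOpen U ∧ IsOpen V ∧ u ∈ U ∧ v ∈ V ∧
    closure U ∩ closure V = ∅

/-!
For points `a, b, c, c'` of `S` the cross difference `(a·b) + (c·c') - (a·c) - (b·c')` of Gromov
products does not involve the basepoint, so it is invariant under isometries. Since Gromov products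
are nonnegative, every isometry `g` therefore satisfies
`(c·c') ≤ (ga·gb) + (gc·gc') + (a·c) + (b·c')`, and on `∂S` the same bound holds up to an additive
constant `E`.

As `x ≠ y`, the product `(u·v)` is bounded by some `K` for `u ∈ U` near `x` and `v ∈ V` near `y`.
Likewise, for distinct `p, q, r`, the products `(a·c)` and `(b·c')` are bounded by some `M` and `M'`
for `a ∈ A` near `p`, `b ∈ B` near `q` and `c, c' ∈ C` near `r`, while shrinking `C` makes `(c·c')`
exceed `2K + M + M' + E`. Then no `g` at all takes points of `A` and `C` into `U` and points of `B`
and `C` into `V`.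
-/

open Filter Set Topology

section Geodesics

variable {S : Type*} [MetricSpace S] {δ : ℝ} {Γ : Set S} {u v p : S}

theorem IsGeodesicSegment.dist_add_dist (h : IsGeodesicSegment Γ u v) (hp : p ∈ Γ) :
    dist u p + dist p v = dist u v := by
  obtain ⟨γ, h0, h1, hd, rfl⟩ := h
  obtain ⟨t, ht, rfl⟩ := hp
  have hu := hd 0 ⟨le_rfl, dist_nonneg⟩ t ht
  have hv := hd t ht (dist u v) ⟨dist_nonneg, le_rfl⟩
  rw [h0, zero_sub, abs_neg, abs_of_nonneg ht.1] at hu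
  rw [h1, abs_of_nonpos (sub_nonpos.2 ht.2)] at hv
  linarith

theorem IsGeodesicSegment.left_mem (h : IsGeodesicSegment Γ u v) : u ∈ Γ := by
  obtain ⟨γ, h0, -, -, rfl⟩ := h
  exact ⟨0, ⟨le_rfl, dist_nonneg⟩, h0⟩

theorem IsGeodesicSegment.right_mem (h : IsGeodesicSegment Γ u v) : v ∈ Γ := by
  obtain ⟨γ, -, h1, -, rfl⟩ := h
  exact ⟨_, ⟨dist_nonneg, le_rfl⟩, h1⟩

theorem IsGeodesicSegment.exists_continuousOn (h : IsGeodesicSegment Γ u v) :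
    ∃ γ : ℝ → S, ContinuousOn γ (Icc 0 (dist u v)) ∧ γ '' Icc 0 (dist u v) = Γ := by
  obtain ⟨γ, -, -, hd, rfl⟩ := h
  have hγ : LipschitzOnWith 1 γ (Icc 0 (dist u v)) :=
    .of_dist_le_mul fun s hs t ht => by simp [hd s hs t ht, Real.dist_eq]
  exact ⟨γ, hγ.continuousOn, rfl⟩

theorem IsGeodesicSegment.isCompact (h : IsGeodesicSegment Γ u v) : IsCompact Γ := by
  obtain ⟨γ, hγ, rfl⟩ := h.exists_continuousOn
  exact isCompact_Icc.image_of_continuousOn hγ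

theorem IsGeodesicSegment.isPreconnected (h : IsGeodesicSegment Γ u v) : IsPreconnected Γ := by
  obtain ⟨γ, hγ, rfl⟩ := h.exists_continuousOn
  exact isPreconnected_Icc.image γ hγ

variable {x y z : S} {Γ₁ Γ₂ Γ₃ : Set S}

theorem DeltaHyperbolic.exists_dist_le (hhyp : DeltaHyperbolic S δ)
    (h₁ : IsGeodesicSegment Γ₁ x y) (h₂ : IsGeodesicSegment Γ₂ y z)
    (h₃ : IsGeodesicSegment Γ₃ z x) (hp : p ∈ Γ₁) : ∃ q ∈ Γ₂ ∪ Γ₃, dist p q ≤ δ := by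
  obtain ⟨q, hq, hpq⟩ := (h₂.isCompact.union h₃.isCompact).exists_infDist_eq_dist
    ⟨y, Or.inl h₂.left_mem⟩ p
  exact ⟨q, hq, hpq ▸ hhyp x y z Γ₁ Γ₂ Γ₃ h₁ h₂ h₃ p hp⟩

theorem DeltaHyperbolic.exists_dist_le_dist_le (hδ : 0 ≤ δ) (hhyp : DeltaHyperbolic S δ)
    (h₁ : IsGeodesicSegment Γ₁ x y) (h₂ : IsGeodesicSegment Γ₂ y z)
    (h₃ : IsGeodesicSegment Γ₃ z x) :
    ∃ p ∈ Γ₁, (∃ q ∈ Γ₂, dist p q ≤ δ) ∧ ∃ q ∈ Γ₃, dist p q ≤ δ := by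
  -- The points of `Γ₁` close to `Γ₂` and those close to `Γ₃` form a closed cover of `Γ₁`.
  have closed (Δ : Set S) : IsClosed {p | Metric.infDist p Δ ≤ δ} :=
    isClosed_le (Metric.continuous_infDist_pt Δ) continuous_const
  have cover : Γ₁ ⊆ {p | Metric.infDist p Γ₂ ≤ δ} ∪ {p | Metric.infDist p Γ₃ ≤ δ} := by
    intro p hp
    obtain ⟨q, hq | hq, hpq⟩ := hhyp.exists_dist_le h₁ h₂ h₃ hp
    · exact Or.inl ((Metric.infDist_le_dist_of_mem hq).trans hpq)
    · exact Or.inr ((Metric.infDist_le_dist_of_mem hq).trans hpq)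
  have hy : Metric.infDist y Γ₂ ≤ δ := (Metric.infDist_zero_of_mem h₂.left_mem).trans_le hδ
  have hx : Metric.infDist x Γ₃ ≤ δ := (Metric.infDist_zero_of_mem h₃.right_mem).trans_le hδ
  obtain ⟨p, hp, hp₂, hp₃⟩ := isPreconnected_closed_iff.1 h₁.isPreconnected _ _
    (closed Γ₂) (closed Γ₃) cover ⟨y, h₁.right_mem, hy⟩ ⟨x, h₁.left_mem, hx⟩
  obtain ⟨q₂, hq₂, hd₂⟩ := h₂.isCompact.exists_infDist_eq_dist ⟨y, h₂.left_mem⟩ p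
  obtain ⟨q₃, hq₃, hd₃⟩ := h₃.isCompact.exists_infDist_eq_dist ⟨z, h₃.left_mem⟩ p
  exact ⟨p, hp, ⟨q₂, hq₂, hd₂ ▸ hp₂⟩, q₃, hq₃, hd₃ ▸ hp₃⟩

end Geodesics

section GromovProduct

variable {S : Type*} [MetricSpace S]

theorem gprod_comm (e u v : S) : gprod e u v = gprod e v u := by
  simp only [gprod, dist_comm u v, add_comm (dist u e)]

theorem gprod_nonneg (e u v : S) : 0 ≤ gprod e u v :=
  div_nonneg (sub_nonneg.2 (dist_triangle_right u v e)) zero_le_two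

theorem gprod_cross_difference (e a b c c' : S) :
    gprod e a b + gprod e c c' - gprod e a c - gprod e b c' =
      (dist a c + dist b c' - dist a b - dist c c') / 2 := by
  simp only [gprod]
  ring

theorem gprod_le_of_isometry (e : S) {f : S → S} (hf : Isometry f) (a b c c' : S) :
    gprod e c c' ≤
      gprod e (f a) (f b) + gprod e (f c) (f c') + gprod e a c + gprod e b c' := by
  have cross := gprod_cross_difference e a b c c'
  have cross_map := gprod_cross_difference e (f a) (f b) (f c) (f c')
  simp only [hf.dist_eq] at cross_map
  linarith [gprod_nonneg e a b, gprod_nonneg e (f a) (f c), gprod_nonneg e (f b) (f c')]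

theorem IsGeodesicSegment.gprod_le_dist {Γ : Set S} {u v p : S} (h : IsGeodesicSegment Γ u v)
    (hp : p ∈ Γ) (e : S) : gprod e u v ≤ dist e p := by
  have hu := dist_triangle u p e
  have hv := dist_triangle v p e
  rw [dist_comm p e] at hu hv
  rw [dist_comm v p] at hv
  simp only [gprod]
  linarith [h.dist_add_dist hp]

theorem DeltaHyperbolic.exists_dist_le_gprod_add {δ : ℝ} (hδ : 0 ≤ δ) (hgeo : GeodesicSpace S)
    (hhyp : DeltaHyperbolic S δ) {u v : S} {Γ : Set S} (h : IsGeodesicSegment Γ u v) (e : S) :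
    ∃ p ∈ Γ, dist e p ≤ gprod e u v + 2 * δ := by
  obtain ⟨Γv, hv⟩ := hgeo v e
  obtain ⟨Γu, hu⟩ := hgeo e u
  obtain ⟨p, hp, ⟨q, hq, hpq⟩, q', hq', hpq'⟩ := hhyp.exists_dist_le_dist_le hδ h hv hu
  refine ⟨p, hp, ?_⟩
  have huv := h.dist_add_dist hp
  have hve := hv.dist_add_dist hq
  have heu := hu.dist_add_dist hq'
  have h1 := dist_triangle e q p
  have h2 := dist_triangle v q p
  have h3 := dist_triangle e q' p
  have h4 := dist_triangle u q' p
  simp only [gprod, dist_comm] at *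
  linarith

/-- The four-point (Gromov) form of hyperbolicity at the basepoint `e`, with additive constant `D`.
Unlike slimness of triangles it does not require geodesics. -/
def FourPoint (e : S) (D : ℝ) : Prop :=
  ∀ x y z : S, min (gprod e x y) (gprod e y z) ≤ gprod e x z + D

theorem DeltaHyperbolic.fourPoint {δ : ℝ} (hδ : 0 ≤ δ) (hgeo : GeodesicSpace S)
    (hhyp : DeltaHyperbolic S δ) (e : S) : FourPoint e (3 * δ) := by
  intro x y z
  obtain ⟨Γ₁, h₁⟩ := hgeo x z
  obtain ⟨Γ₂, h₂⟩ := hgeo z y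
  obtain ⟨Γ₃, h₃⟩ := hgeo y x
  obtain ⟨p, hp, hpe⟩ := hhyp.exists_dist_le_gprod_add hδ hgeo h₁ e
  obtain ⟨q, hq, hpq⟩ := hhyp.exists_dist_le h₁ h₂ h₃ hp
  have heq : dist e q ≤ gprod e x z + 3 * δ := by linarith [dist_triangle e p q]
  rw [gprod_comm e x y, gprod_comm e y z]
  rcases hq with hq | hq
  · exact min_le_of_right_le ((h₂.gprod_le_dist hq e).trans heq)
  · exact min_le_of_left_le ((h₃.gprod_le_dist hq e).trans heq)

variable {e : S} {D : ℝ}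

theorem FourPoint.nonneg (hF : FourPoint e D) : 0 ≤ D := by
  simpa [gprod] using hF e e e

theorem FourPoint.sub_le (hF : FourPoint e D) {x y z : S} {L : ℝ} (hxy : L ≤ gprod e x y)
    (hyz : L ≤ gprod e y z) : L - D ≤ gprod e x z :=
  sub_le_iff_le_add.2 ((le_min hxy hyz).trans (hF x y z))

theorem FourPoint.middle_le (hF : FourPoint e D) {a b c d : S} {K : ℝ} (had : gprod e a d < K)
    (hab : K + 2 * D ≤ gprod e a b) (hcd : K + 2 * D ≤ gprod e c d) :
    gprod e b c ≤ K + 2 * D := by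
  by_contra! hbc
  have hac := hF.sub_le hab hbc.le
  have had' := hF.sub_le hac (by linarith [hF.nonneg] : K + 2 * D - D ≤ gprod e c d)
  linarith

end GromovProduct

section Boundary

variable {S : Type*} [MetricSpace S] {e : S} {D : ℝ} {x y z : GBoundary S e} {s t : ℕ → S}

theorem exists_tendstoBd (x : GBoundary S e) : ∃ s, TendstoBd e s x := by
  obtain ⟨s, rfl⟩ := Quot.exists_rep x
  exact ⟨s.1, s.2, rfl⟩

theorem TendstoBd.map (hs : TendstoBd e s x) {f : S → S} (hf : Isometry f) :
    TendstoBd e (fun n => f (s n)) (bdMap e f hf x) := by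
  obtain ⟨hs, rfl⟩ := hs
  exact ⟨hs.comp hf, rfl⟩

theorem FourPoint.equivalence_bequiv (hF : FourPoint e D) : Equivalence (bequiv (S := S) e) where
  refl s := Tendsto.comp (show Tendsto _ _ _ from s.2) tendsto_atTop_diagonal
  symm h := Tendsto.congr (fun _ => gprod_comm _ _ _) h
  trans h h' := tendsto_atTop.2 fun L => by
    filter_upwards [h.eventually_ge_atTop (L + D), h'.eventually_ge_atTop (L + D)] with n hn hn'
    linarith [hF.sub_le hn hn']

theorem FourPoint.tendsto_gprod (hF : FourPoint e D) (hs : TendstoBd e s x)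
    (ht : TendstoBd e t x) :
    Tendsto (fun p : ℕ × ℕ => gprod e (s p.1) (t p.2)) atTop atTop := by
  obtain ⟨hs, rfl⟩ := hs
  obtain ⟨ht, hts⟩ := ht
  have hst : bequiv e ⟨s, hs⟩ ⟨t, ht⟩ :=
    hF.equivalence_bequiv.eqvGen_iff.1 (Quot.eqvGen_exact hts.symm)
  -- `(s i · t j)` is compared with `(s i · s j)` and `(s j · t j)`.
  have hst' : Tendsto (fun p : ℕ × ℕ => gprod e (s p.2) (t p.2)) atTop atTop :=
    Tendsto.comp (show Tendsto _ _ _ from hst)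
      (prod_atTop_atTop_eq (α := ℕ) (β := ℕ) ▸ tendsto_snd)
  refine tendsto_atTop.2 fun L => ?_
  filter_upwards [Tendsto.eventually_ge_atTop hs (L + D), hst'.eventually_ge_atTop (L + D)]
    with p hp hp'
  linarith [hF.sub_le hp hp']

theorem gprodBB_comm (x y : GBoundary S e) : gprodBB e x y = gprodBB e y x := by
  suffices h : ∀ x y : GBoundary S e, gprodBB e x y ≤ gprodBB e y x from (h x y).antisymm (h y x)
  intro x y
  refine le_sInf ?_
  rintro _ ⟨s, t, hs, ht, rfl⟩
  refine sInf_le ⟨t, s, ht, hs, ?_⟩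
  conv_lhs => rw [← (OrderIso.prodComm (α := ℕ) (β := ℕ)).map_atTop]
  simp only [gprod_comm e (s _)]
  rfl

theorem gprodBB_nonneg (x y : GBoundary S e) : 0 ≤ gprodBB e x y := by
  refine le_sInf ?_
  rintro _ ⟨s, t, -, -, rfl⟩
  exact le_liminf_of_le (by isBoundedDefault)
    (.of_forall fun p => EReal.coe_nonneg.2 (gprod_nonneg e _ _))

theorem eventually_lt_gprod {L : ℝ} (h : (L : EReal) < gprodBB e x y) (hs : TendstoBd e s x)
    (ht : TendstoBd e t y) : ∀ᶠ p : ℕ × ℕ in atTop, L < gprod e (s p.1) (t p.2) := by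
  have hL : (L : EReal) <
      liminf (fun p : ℕ × ℕ => (gprod e (s p.1) (t p.2) : EReal)) atTop :=
    h.trans_le (sInf_le ⟨s, t, hs, ht, rfl⟩)
  filter_upwards [eventually_lt_of_lt_liminf hL] with p hp
  exact EReal.coe_lt_coe_iff.1 hp

theorem eventually_lt_gprod_diag {L : ℝ} (h : (L : EReal) < gprodBB e x y)
    (hs : TendstoBd e s x) (ht : TendstoBd e t y) : ∀ᶠ n in atTop, L < gprod e (s n) (t n) :=
  tendsto_atTop_diagonal.eventually (eventually_lt_gprod h hs ht)

/-- The boundary product is only an infimum over sequences, so bounding it from above bounds the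
products along other sequences up to an error. -/
theorem FourPoint.eventually_gprod_le (hF : FourPoint e D) {K : ℝ}
    (h : gprodBB e x y < (K : EReal)) (hs : TendstoBd e s x) (ht : TendstoBd e t y) :
    ∀ᶠ n in atTop, gprod e (s n) (t n) ≤ K + 2 * D := by
  obtain ⟨_, ⟨s', t', hs', ht', rfl⟩, hlt⟩ := sInf_lt_iff.1 h
  have frequently_lt := frequently_lt_of_liminf_lt (by isBoundedDefault) hlt
  obtain ⟨i, hi⟩ := eventually_atTop.1
    ((hF.tendsto_gprod hs' hs).eventually_ge_atTop (K + 2 * D))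
  obtain ⟨j, hj⟩ := eventually_atTop.1
    ((hF.tendsto_gprod ht ht').eventually_ge_atTop (K + 2 * D))
  obtain ⟨⟨k, l⟩, ⟨hk, hl⟩, hkl⟩ := frequently_atTop.1 frequently_lt (i.1, j.2)
  filter_upwards [eventually_ge_atTop i.2, eventually_ge_atTop j.1] with n hni hnj
  exact hF.middle_le (EReal.coe_lt_coe_iff.1 hkl) (hi (k, n) ⟨hk, hni⟩) (hj (n, l) ⟨hnj, hl⟩)

theorem gprodBB_ne_top (hxy : x ≠ y) : gprodBB e x y ≠ ⊤ := by
  intro htop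
  obtain ⟨s, hs, rfl⟩ := exists_tendstoBd x
  obtain ⟨t, ht, rfl⟩ := exists_tendstoBd y
  refine hxy (Quot.sound (tendsto_atTop.2 fun L => ?_))
  filter_upwards [eventually_lt_gprod_diag (htop ▸ EReal.coe_lt_top L) ⟨hs, rfl⟩ ⟨ht, rfl⟩]
    with n hn using hn.le

theorem FourPoint.sub_le_gprodBB (hF : FourPoint e D) {L : ℝ} (hxy : (L : EReal) < gprodBB e x y)
    (hyz : (L : EReal) < gprodBB e y z) : ((L - D : ℝ) : EReal) ≤ gprodBB e x z := by
  refine le_sInf ?_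
  rintro _ ⟨s, t, hs, ht, rfl⟩
  obtain ⟨u, hu⟩ := exists_tendstoBd y
  have hsu : ∀ᶠ p : ℕ × ℕ in atTop, L < gprod e (s p.1) (u p.1) :=
    (prod_atTop_atTop_eq (α := ℕ) (β := ℕ) ▸ tendsto_fst).eventually
      (eventually_lt_gprod_diag hxy hs hu)
  refine le_liminf_of_le (by isBoundedDefault) ?_
  filter_upwards [hsu, eventually_lt_gprod hyz hu ht] with p hp hp'
  exact EReal.coe_le_coe_iff.2 (hF.sub_le hp.le hp'.le)

theorem FourPoint.gprodBB_le_of_isometry (hF : FourPoint e D) {f : S → S} (hf : Isometry f)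
    {a b c c' : GBoundary S e} {K K' M M' : ℝ}
    (hab : gprodBB e (bdMap e f hf a) (bdMap e f hf b) < K)
    (hcc' : gprodBB e (bdMap e f hf c) (bdMap e f hf c') < K')
    (hac : gprodBB e a c < M) (hbc' : gprodBB e b c' < M') :
    gprodBB e c c' ≤ ((K + K' + M + M' + 8 * D : ℝ) : EReal) := by
  by_contra! hlt
  obtain ⟨sa, ha⟩ := exists_tendstoBd a
  obtain ⟨sb, hb⟩ := exists_tendstoBd b
  obtain ⟨sc, hc⟩ := exists_tendstoBd c
  obtain ⟨sc', hc'⟩ := exists_tendstoBd c'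
  have key : ∀ᶠ _ : ℕ in atTop, False := by
    filter_upwards [hF.eventually_gprod_le hab (ha.map hf) (hb.map hf),
      hF.eventually_gprod_le hcc' (hc.map hf) (hc'.map hf), hF.eventually_gprod_le hac ha hc,
      hF.eventually_gprod_le hbc' hb hc', eventually_lt_gprod_diag hlt hc hc']
      with n hab hcc' hac hbc' hlt
    linarith [gprod_le_of_isometry e hf (sa n) (sb n) (sc n) (sc' n)]
  exact key.exists.elim fun _ => id

end Boundary

section VisualTopology

variable {S : Type*} [MetricSpace S] {e : S} {D ζ : ℝ} {x y : GBoundary S e}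

theorem lt_gprodBB_of_dExp_lt (hζ : 0 < ζ) {L : ℝ} (h : dExp e ζ x y < Real.exp (-ζ * L)) :
    (L : EReal) < gprodBB e x y := by
  by_cases htop : gprodBB e x y = ⊤
  · exact htop ▸ EReal.coe_lt_top L
  rw [dExp, if_neg htop, Real.exp_lt_exp, mul_lt_mul_left_of_neg (neg_neg_of_pos hζ)] at h
  have hbot : gprodBB e x y ≠ ⊥ := (EReal.bot_lt_zero.trans_le (gprodBB_nonneg x y)).ne'
  rw [← EReal.coe_toReal htop hbot]
  exact EReal.coe_lt_coe_iff.2 h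

theorem VisualParam.exists_isOpen_lt_gprodBB (hζ : VisualParam e ζ) (x : GBoundary S e) (L : ℝ) :
    ∃ U, IsOpen[bdTopology S e ζ] U ∧ x ∈ U ∧ ∀ a ∈ U, (L : EReal) < gprodBB e x a := by
  obtain ⟨hpos, hmetric, hcomp⟩ := hζ
  have hε : 0 < Real.exp (-ζ * L) / 2 := half_pos (Real.exp_pos _)
  refine ⟨{a | rhoChain e ζ x a < Real.exp (-ζ * L) / 2},
    TopologicalSpace.isOpen_generateFrom_of_mem ⟨x, _, hε, rfl⟩,
    ((hmetric.2.1 x x).2 rfl).trans_lt hε, fun a ha => lt_gprodBB_of_dExp_lt hpos ?_⟩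
  linarith [(hcomp x a).1, show rhoChain e ζ x a < Real.exp (-ζ * L) / 2 from ha]

theorem VisualParam.exists_isOpen_lt_gprodBB_pairwise (hζ : VisualParam e ζ)
    (hF : FourPoint e D) (x : GBoundary S e) (L : ℝ) :
    ∃ U, IsOpen[bdTopology S e ζ] U ∧ x ∈ U ∧ ∀ a ∈ U, ∀ b ∈ U, (L : EReal) < gprodBB e a b := by
  obtain ⟨U, hU, hxU, hlt⟩ := hζ.exists_isOpen_lt_gprodBB x (L + D + 1)
  refine ⟨U, hU, hxU, fun a ha b hb => ?_⟩
  have hab := hF.sub_le_gprodBB (gprodBB_comm x a ▸ hlt a ha) (hlt b hb)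
  exact (EReal.coe_lt_coe_iff.2 (by linarith)).trans_le hab

theorem VisualParam.exists_isOpen_gprodBB_lt (hζ : VisualParam e ζ) (hF : FourPoint e D)
    (hxy : x ≠ y) :
    ∃ (K : ℝ) (U V : Set (GBoundary S e)), IsOpen[bdTopology S e ζ] U ∧
      IsOpen[bdTopology S e ζ] V ∧ x ∈ U ∧ y ∈ V ∧ ∀ a ∈ U, ∀ b ∈ V, gprodBB e a b < K := by
  obtain ⟨K, hK, -⟩ := EReal.lt_iff_exists_real_btwn.1 (gprodBB_ne_top hxy).lt_top
  obtain ⟨U, hU, hxU, hUlt⟩ := hζ.exists_isOpen_lt_gprodBB x (K + 2 * D + 1)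
  obtain ⟨V, hV, hyV, hVlt⟩ := hζ.exists_isOpen_lt_gprodBB y (K + 2 * D + 1)
  refine ⟨K + 2 * D + 2, U, V, hU, hV, hxU, hyV, fun a ha b hb => ?_⟩
  by_contra! hab
  have hab' : ((K + 2 * D + 1 : ℝ) : EReal) < gprodBB e a b :=
    (EReal.coe_lt_coe_iff.2 (by linarith)).trans_le hab
  have hxb : ((K + D : ℝ) : EReal) < gprodBB e x b :=
    (EReal.coe_lt_coe_iff.2 (by linarith)).trans_le (hF.sub_le_gprodBB (hUlt a ha) hab')
  have hby : ((K + D : ℝ) : EReal) < gprodBB e b y :=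
    (EReal.coe_lt_coe_iff.2 (by linarith [hF.nonneg])).trans (gprodBB_comm y b ▸ hVlt b hb)
  exact hK.not_ge (add_sub_cancel_right K D ▸ hF.sub_le_gprodBB hxb hby)

end VisualTopology

theorem statement12_general {G S : Type*} [MetricSpace S] {e : S} {D : ℝ} (hF : FourPoint e D)
    {act : G → S → S} (hact : ∀ g, Isometry (act g)) {ζ : ℝ} (hζ : VisualParam e ζ)
    {x y : GBoundary S e} (hxy : x ≠ y) :
    @PairC2 G (GBoundary S e) (bdTopology S e ζ) (fun g => bdMap e (act g) (hact g)) x y := by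
  let := bdTopology S e ζ
  obtain ⟨K, U, V, hU, hV, hxU, hyV, hK⟩ := hζ.exists_isOpen_gprodBB_lt hF hxy
  refine ⟨U, V, hU, hV, hxU, hyV, fun p q r _ hqr hpr => ?_⟩
  obtain ⟨M, A, C₁, hA, hC₁, hpA, hrC₁, hM⟩ := hζ.exists_isOpen_gprodBB_lt hF hpr
  obtain ⟨M', B, C₂, hB, hC₂, hqB, hrC₂, hM'⟩ := hζ.exists_isOpen_gprodBB_lt hF hqr
  obtain ⟨C₃, hC₃, hrC₃, hL⟩ :=
    hζ.exists_isOpen_lt_gprodBB_pairwise hF r (K + K + M + M' + 8 * D)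
  refine ⟨A, B, C₁ ∩ C₂ ∩ C₃, hA, hB, (hC₁.inter hC₂).inter hC₃, hpA, hqB,
    ⟨⟨hrC₁, hrC₂⟩, hrC₃⟩, finite_empty.subset ?_⟩
  rintro g ⟨⟨_, ⟨a, ha, rfl⟩, hga⟩, ⟨_, ⟨b, hb, rfl⟩, hgb⟩, ⟨_, ⟨c, hc, rfl⟩, hgc⟩,
    ⟨_, ⟨c', hc', rfl⟩, hgc'⟩⟩
  exact (hL c hc.2 c' hc'.2).not_ge (hF.gprodBB_le_of_isometry (hact g) (hK _ hga _ hgb)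
    (hK _ hgc _ hgc') (hM a ha c hc.1.1) (hM' b hb c' hc'.1.2))

/-- For an isometric action of `G` on a geodesic `δ`-hyperbolic space,
every pair of distinct boundary points satisfies condition (C₂) for the induced action
on the Gromov boundary. -/
theorem statement12 {G S : Type*} [Group G] [MetricSpace S] (δ : ℝ) (hδ : 0 ≤ δ)
    (hgeo : GeodesicSpace S) (hhyp : DeltaHyperbolic S δ)
    {act : G → S → S} (hact : IsIsometricAction act)
    (e : S) (ζ : ℝ) (hζ : VisualParam e ζ)
    (x y : GBoundary S e) (hxy : x ≠ y) :
    @PairC2 G (GBoundary S e) (bdTopology S e ζ)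
      (fun g => bdMap e (act g) (hact.2 g)) x y :=
  statement12_general (hhyp.fourPoint hδ hgeo e) hact.2 hζ hxy
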